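/- (Deterministic core of Theorem 5.1, part 2: feature suppression by the minimum-norm minimizer.) In the structured contrastive dataset with μ = 0 and 1 ≤ p ≤ K, suppose that at least p elements of the (K−1)-tuple (1, φ_2², φ_3²/(K−2), …, φ_K²/(K−2)) are strictly greater than φ_1². Then every minimum-norm global minimizer of L_UCL — every W** ∈ ℝ^{p×D} minimizing the Frobenius norm among all global minimizers of L_UCL — satisfies W** v_1 = 0; the class feature v_1 is suppressed. -/

import Mathlib

open Matrix

/-- The contrastive trace loss `Tr(-2 WᵀW P + WᵀW M WᵀW M)`. -/
noncomputable def CLTraceLoss {p D : ℕ} (P M : Matrix (Fin D) (Fin D) ℝ)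
    (W : Matrix (Fin p) (Fin D) ℝ) : ℝ :=
  Matrix.trace ((-2 : ℝ) • (Wᵀ * W * P) + Wᵀ * W * M * (Wᵀ * W) * M)

/-!
Completing the square, `CLTraceLoss P M W + p = ‖W M Wᵀ - 1‖² + 2 Tr (W (M - P) Wᵀ)`, so as soon as
some `W` makes both terms vanish the global minimizers are exactly the `W` with `W M Wᵀ = 1` on
which the gap `M - P ⪰ 0` vanishes. Write `M = Hᵀ H + E`, where the rows `h_j` of `H` are orthogonal
eigenvectors of `M` with `‖h_j‖² = l_j` equal to the eigenvalue, and `E ⪰ 0` annihilates them. The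
masses `c_j = ‖W h_j‖²` of such a `W` lie in `[0, 1]` and, together with the mass `Tr (W E Wᵀ)`, sum
to `p`, while `‖W‖²` is at least `∑ j, c_j / l_j` plus `1 / ‖E‖` times the mass of `E`. Minimizing
the norm is thus a linear program, solved by putting mass one on `p` largest eigenvalues; if `p` of
the `l_j` exceed `l_o ≥ ‖E‖`, then `W h_o = 0`.

In the dataset, correlating the samples with the signal of the feature `v_j` yields the eigenvector
`h_j`, a combination of `v_j` and noise. It is annihilated by the gap, because averaging over blocks
preserves signals that are constant on blocks. Finally `v_1` is a combination of `h_1` and a vector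
orthogonal to all samples, which a minimum-norm minimizer also annihilates.
-/

section Selection

variable {ι : Type*}

lemma exists_subset_card_eq_forall_notMem_le {α : Type*} [LinearOrder α] (f : ι → α)
    (s : Finset ι) {p : ℕ} (hp : p ≤ s.card) :
    ∃ T ⊆ s, T.card = p ∧ ∀ i ∈ T, ∀ j ∈ s, j ∉ T → f j ≤ f i := by
  classical
  induction p with
  | zero => exact ⟨∅, by simp⟩
  | succ p ih =>
    obtain ⟨T, hTs, hTcard, hT⟩ := ih (by omega)
    have hne : (s \ T).Nonempty := by
      rw [← Finset.card_pos, Finset.card_sdiff_of_subset hTs]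
      omega
    obtain ⟨k, hk, hmax⟩ := Finset.exists_max_image (s \ T) f hne
    obtain ⟨hks, hkT⟩ := Finset.mem_sdiff.1 hk
    refine ⟨insert k T, Finset.insert_subset hks hTs, by
      rw [Finset.card_insert_of_notMem hkT, hTcard], fun i hi j hjs hj => ?_⟩
    obtain ⟨-, hjT⟩ := not_or.1 (Finset.mem_insert.not.1 hj)
    rcases Finset.mem_insert.1 hi with rfl | hi
    · exact hmax j (Finset.mem_sdiff.2 ⟨hjs, hjT⟩)
    · exact hT i hi j hjs hjT

variable [Fintype ι]

lemma exists_card_eq_lt_forall_notMem_le {α : Type*} [LinearOrder α] (f : ι → α) (o : ι) {p : ℕ}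
    (hp : p ≤ (Finset.univ.filter fun j => f o < f j).card) :
    ∃ T : Finset ι, T.card = p ∧ (∀ i ∈ T, f o < f i) ∧ ∀ i ∈ T, ∀ j ∉ T, f j ≤ f i := by
  classical
  obtain ⟨T, hTsub, hTcard, hT⟩ := exists_subset_card_eq_forall_notMem_le f _ hp
  have hlt : ∀ i ∈ T, f o < f i := fun i hi => (Finset.mem_filter.1 (hTsub hi)).2
  refine ⟨T, hTcard, hlt, fun i hi j hj => ?_⟩
  by_cases hoj : f o < f j
  · exact hT i hi j (Finset.mem_filter.2 ⟨Finset.mem_univ j, hoj⟩) hj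
  · exact (not_lt.1 hoj).trans (hlt i hi).le

-- With `τ` the largest cost on `T`, every term of `∑ j, (a j - τ) * (c j - 1_T j)` is nonnegative.
lemma eq_zero_of_sum_mul_le_sum {R : Type*} [CommRing R] [LinearOrder R] [IsStrictOrderedRing R]
    {a c : ι → R} {T : Finset ι} {o : ι} (hc : ∀ j, 0 ≤ c j)
    (hcT : ∀ j ∈ T, c j ≤ 1) (hsum : ∑ j, c j = T.card)
    (hT : ∀ i ∈ T, ∀ j ∉ T, a i ≤ a j) (ho : ∀ i ∈ T, a i < a o)
    (hle : ∑ j, a j * c j ≤ ∑ j ∈ T, a j) : c o = 0 := by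
  classical
  rcases T.eq_empty_or_nonempty with rfl | hne
  · exact (Finset.sum_eq_zero_iff_of_nonneg fun j _ => hc j).1 (by simpa using hsum) o
      (Finset.mem_univ o)
  obtain ⟨k, hk, hmax⟩ := Finset.exists_max_image T a hne
  set gap : ι → R := fun j => (a j - a k) * (c j - if j ∈ T then 1 else 0) with hgap
  have hgap_nonneg : ∀ j ∈ Finset.univ, 0 ≤ gap j := by
    intro j _
    by_cases hj : j ∈ T
    · simpa [hgap, hj] using
        mul_nonneg_of_nonpos_of_nonpos (sub_nonpos.2 (hmax j hj)) (sub_nonpos.2 (hcT j hj))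
    · simpa [hgap, hj] using mul_nonneg (sub_nonneg.2 (hT k hk j hj)) (hc j)
  have hgap_sum : ∑ j, gap j = ∑ j, a j * c j - ∑ j ∈ T, a j := by
    simp only [hgap, mul_sub, sub_mul, Finset.sum_sub_distrib, ← Finset.mul_sum, hsum, mul_ite,
      mul_one, mul_zero, Finset.sum_ite_mem, Finset.univ_inter, Finset.sum_const, nsmul_eq_mul]
    ring
  have hgap_o : gap o = 0 :=
    (Finset.sum_eq_zero_iff_of_nonneg hgap_nonneg).1
      (le_antisymm (by linarith) (Finset.sum_nonneg hgap_nonneg)) o (Finset.mem_univ o)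
  have hoT : o ∉ T := fun h => (ho o h).false
  simpa [hgap, hoT, (sub_pos.2 (ho k hk)).ne'] using hgap_o

end Selection

section PosSemidef

variable {ι d : Type*} [Fintype ι]

lemma trace_mul_mul_transpose_nonneg [Fintype d] {A : Matrix d d ℝ} (hA : A.PosSemidef)
    (W : Matrix ι d ℝ) : 0 ≤ (W * A * Wᵀ).trace := by
  simpa only [conjTranspose_eq_transpose_of_trivial] using
    (hA.mul_mul_conjTranspose_same W).trace_nonneg

lemma trace_transpose_mul_self_nonneg [Fintype d] (A : Matrix ι d ℝ) : 0 ≤ (Aᵀ * A).trace := by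
  simpa only [conjTranspose_eq_transpose_of_trivial] using
    (posSemidef_conjTranspose_mul_self A).trace_nonneg

variable [DecidableEq ι] [DecidableEq d]

open scoped ComplexOrder in
lemma posSemidef_one_sub_mul_conjTranspose_comm [Fintype d] {𝕜 : Type*} [RCLike 𝕜]
    (B : Matrix ι d 𝕜) : (1 - B * Bᴴ).PosSemidef ↔ (1 - Bᴴ * B).PosSemidef := by
  let _ : Invertible (1 : Matrix ι ι 𝕜) := invertibleOne
  let _ : Invertible (1 : Matrix d d 𝕜) := invertibleOne
  simpa using (PosDef.fromBlocks₂₂ 1 B PosDef.one).symm.trans (PosDef.fromBlocks₁₁ B 1 PosDef.one)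

/-- The orthogonal projection onto the complement of the row space of `H`, when the rows of `H`
are orthogonal with squared norms `l`. -/
noncomputable def rowComplement (H : Matrix ι d ℝ) (l : ι → ℝ) : Matrix d d ℝ :=
  1 - Hᵀ * diagonal l⁻¹ * H

lemma rowComplement_transpose (H : Matrix ι d ℝ) (l : ι → ℝ) :
    (rowComplement H l)ᵀ = rowComplement H l := by
  simp [rowComplement, Matrix.mul_assoc]

variable [Fintype d] {H : Matrix ι d ℝ} {l : ι → ℝ}

lemma mul_rowComplement (hH : H * Hᵀ = diagonal l) (hl : ∀ j, l j ≠ 0) :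
    H * rowComplement H l = 0 := by
  have hinv : diagonal l * diagonal l⁻¹ = (1 : Matrix ι ι ℝ) := by
    simp [diagonal_mul_diagonal, hl]
  rw [rowComplement, Matrix.mul_sub, Matrix.mul_one, ← Matrix.mul_assoc, ← Matrix.mul_assoc, hH,
    hinv, Matrix.one_mul, sub_self]

lemma rowComplement_mul_self (hH : H * Hᵀ = diagonal l) (hl : ∀ j, l j ≠ 0) :
    rowComplement H l * rowComplement H l = rowComplement H l := by
  conv_lhs => enter [1]; rw [rowComplement]
  rw [Matrix.sub_mul, Matrix.one_mul, Matrix.mul_assoc, mul_rowComplement hH hl, Matrix.mul_zero,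
    sub_zero]

lemma posSemidef_rowComplement (hH : H * Hᵀ = diagonal l) (hl : ∀ j, l j ≠ 0) :
    (rowComplement H l).PosSemidef := by
  simpa only [conjTranspose_eq_transpose_of_trivial, rowComplement_transpose,
    rowComplement_mul_self hH hl] using posSemidef_conjTranspose_mul_self (rowComplement H l)

lemma posSemidef_one_sub_smul_transpose_mul_self {c : ℝ} (hH : H * Hᵀ = c • 1) (hc : c ≠ 0) :
    (1 - c⁻¹ • (Hᵀ * H)).PosSemidef := by
  have hinv : (fun _ => c : ι → ℝ)⁻¹ = fun _ => c⁻¹ := rfl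
  simpa [rowComplement, hinv, ← smul_one_eq_diagonal] using
    posSemidef_rowComplement (l := fun _ => c) (hH.trans (smul_one_eq_diagonal c)) fun _ => hc

lemma posSemidef_rowComplement_sub_smul {E : Matrix d d ℝ} {s : ℝ} (hH : H * Hᵀ = diagonal l)
    (hl : ∀ j, l j ≠ 0) (hE : E * Hᵀ = 0) (hs : 0 < s) (hEs : (s • 1 - E).PosSemidef) :
    (rowComplement H l - s⁻¹ • E).PosSemidef := by
  have hE_symm : Eᵀ = E := by
    simpa [IsHermitian, conjTranspose_eq_transpose_of_trivial] using hEs.isHermitian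
  have hHE : H * E = 0 := by simpa [hE_symm] using congrArg transpose hE
  have hEQ : E * rowComplement H l = E := by
    rw [rowComplement, Matrix.mul_sub, ← Matrix.mul_assoc, ← Matrix.mul_assoc, hE]
    simp
  have hQE : rowComplement H l * E = E := by
    rw [rowComplement, Matrix.sub_mul, Matrix.mul_assoc _ H, hHE]
    simp
  have hconj := (hEs.mul_mul_conjTranspose_same (rowComplement H l)).smul (inv_pos.2 hs).le
  rwa [conjTranspose_eq_transpose_of_trivial, rowComplement_transpose, Matrix.mul_sub,
    Matrix.sub_mul, Matrix.mul_smul, Matrix.smul_mul, Matrix.mul_one,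
    rowComplement_mul_self hH hl, hQE, hEQ, smul_sub, smul_smul, inv_mul_cancel₀ hs.ne',
    one_smul] at hconj

end PosSemidef

section Loss

variable {p D : ℕ} {P M : Matrix (Fin D) (Fin D) ℝ} {W V : Matrix (Fin p) (Fin D) ℝ}

lemma CLTraceLoss_eq_trace (P M : Matrix (Fin D) (Fin D) ℝ) (W : Matrix (Fin p) (Fin D) ℝ) :
    CLTraceLoss P M W = (W * M * Wᵀ * (W * M * Wᵀ)).trace - 2 * (W * P * Wᵀ).trace := by
  have hlin : (Wᵀ * W * P).trace = (W * P * Wᵀ).trace := by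
    rw [Matrix.mul_assoc, trace_mul_comm]
  have hquad : (Wᵀ * W * M * (Wᵀ * W) * M).trace = (W * M * Wᵀ * (W * M * Wᵀ)).trace := by
    simpa only [Matrix.mul_assoc] using trace_mul_comm Wᵀ (W * M * Wᵀ * W * M)
  rw [CLTraceLoss, trace_add, trace_smul, hlin, hquad, smul_eq_mul]
  ring

lemma CLTraceLoss_eq_sq_add (hM : Mᵀ = M) (W : Matrix (Fin p) (Fin D) ℝ) :
    CLTraceLoss P M W = ((W * M * Wᵀ - 1)ᵀ * (W * M * Wᵀ - 1)).trace
      + 2 * (W * (M - P) * Wᵀ).trace - p := by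
  have hsymm : (W * M * Wᵀ)ᵀ = W * M * Wᵀ := by simp [hM, Matrix.mul_assoc]
  rw [CLTraceLoss_eq_trace, transpose_sub, transpose_one, hsymm]
  simp only [Matrix.mul_sub, Matrix.sub_mul, Matrix.mul_one, Matrix.one_mul, trace_sub, trace_one,
    Fintype.card_fin]
  ring

lemma neg_natCast_le_CLTraceLoss (hM : Mᵀ = M) (hPM : (M - P).PosSemidef)
    (W : Matrix (Fin p) (Fin D) ℝ) : -(p : ℝ) ≤ CLTraceLoss P M W := by
  have hsq := trace_transpose_mul_self_nonneg (W * M * Wᵀ - 1)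
  have hgap := trace_mul_mul_transpose_nonneg hPM W
  rw [CLTraceLoss_eq_sq_add hM]
  linarith

lemma CLTraceLoss_eq_neg_natCast (hM : Mᵀ = M) (hW : W * M * Wᵀ = 1)
    (hgap : (M - P) * Wᵀ = 0) : CLTraceLoss P M W = -p := by
  rw [CLTraceLoss_eq_sq_add hM, hW, Matrix.mul_assoc, hgap]
  simp

lemma mul_mul_transpose_eq_one_of_CLTraceLoss_le (hM : Mᵀ = M) (hPM : (M - P).PosSemidef)
    (hW : CLTraceLoss P M W ≤ -p) : W * M * Wᵀ = 1 := by
  have hsq := trace_transpose_mul_self_nonneg (W * M * Wᵀ - 1)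
  have hgap := trace_mul_mul_transpose_nonneg hPM W
  rw [CLTraceLoss_eq_sq_add hM] at hW
  have hsq_zero : ((W * M * Wᵀ - 1)ᴴ * (W * M * Wᵀ - 1)).trace = 0 := by
    rw [conjTranspose_eq_transpose_of_trivial]
    linarith
  exact sub_eq_zero.1 (trace_conjTranspose_mul_self_eq_zero_iff.1 hsq_zero)

lemma CLTraceLoss_congr (hM : Mᵀ = M) (hP : Pᵀ = P) (hVM : V * M = W * M)
    (hVP : V * P = W * P) : CLTraceLoss P M V = CLTraceLoss P M W := by
  have hcongr : ∀ {A : Matrix (Fin D) (Fin D) ℝ}, Aᵀ = A → V * A = W * A →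
      V * A * Vᵀ = W * A * Wᵀ := by
    intro A hA hVA
    have hAV : A * Vᵀ = A * Wᵀ := by simpa [hA] using congrArg transpose hVA
    rw [hVA, Matrix.mul_assoc, hAV, Matrix.mul_assoc]
  rw [CLTraceLoss_eq_trace, CLTraceLoss_eq_trace, hcongr hM hVM, hcongr hP hVP]

/-- `W` minimizes the Frobenius norm among the global minimizers of the contrastive loss. -/
def IsMinNormMinimizer (P M : Matrix (Fin D) (Fin D) ℝ) (W : Matrix (Fin p) (Fin D) ℝ) : Prop :=
  (∀ W' : Matrix (Fin p) (Fin D) ℝ, CLTraceLoss P M W ≤ CLTraceLoss P M W') ∧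
    ∀ V : Matrix (Fin p) (Fin D) ℝ,
      (∀ W' : Matrix (Fin p) (Fin D) ℝ, CLTraceLoss P M V ≤ CLTraceLoss P M W') →
      √(∑ i, ∑ j, W i j ^ 2) ≤ √(∑ i, ∑ j, V i j ^ 2)

namespace IsMinNormMinimizer

lemma trace_mul_transpose_le (hW : IsMinNormMinimizer P M W)
    (hV : CLTraceLoss P M V ≤ CLTraceLoss P M W) : (W * Wᵀ).trace ≤ (V * Vᵀ).trace := by
  have htrace : ∀ U : Matrix (Fin p) (Fin D) ℝ, (U * Uᵀ).trace = ∑ i, ∑ j, U i j ^ 2 := by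
    simp [trace, mul_apply, sq]
  rw [htrace, htrace, ← Real.sqrt_le_sqrt_iff (by positivity)]
  exact hW.2 V fun W' => hV.trans (hW.1 W')

-- Projecting the rows of `W` off `z` keeps the loss and shrinks the norm.
lemma mulVec_eq_zero_of_mulVec_eq_zero (hW : IsMinNormMinimizer P M W) (hM : Mᵀ = M)
    (hP : Pᵀ = P) {z : Fin D → ℝ} (hMz : M *ᵥ z = 0) (hPz : P *ᵥ z = 0) : W *ᵥ z = 0 := by
  rcases eq_or_ne z 0 with rfl | hz
  · exact mulVec_zero W
  have hzz : z ⬝ᵥ z ≠ 0 := dotProduct_self_eq_zero.not.2 hz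
  set V := W - (z ⬝ᵥ z)⁻¹ • vecMulVec (W *ᵥ z) z with hV
  have hVA : ∀ {A : Matrix (Fin D) (Fin D) ℝ}, Aᵀ = A → A *ᵥ z = 0 → V * A = W * A := by
    intro A hA hAz
    have hzA : z ᵥ* A = 0 := by rw [← mulVec_transpose, hA, hAz]
    rw [hV, Matrix.sub_mul, Matrix.smul_mul, vecMulVec_mul, hzA]
    ext
    simp [vecMulVec_apply]
  have hnorm := hW.trace_mul_transpose_le
    (CLTraceLoss_congr hM hP (hVA hM hMz) (hVA hP hPz)).le
  have hVz : V *ᵥ z = 0 := by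
    rw [hV, sub_mulVec, smul_mulVec, vecMulVec_mulVec, op_smul_eq_smul, smul_smul,
      inv_mul_cancel₀ hzz, one_smul, sub_self]
  have hVV : (V * Vᵀ).trace = (W * Wᵀ).trace - (z ⬝ᵥ z)⁻¹ * (W *ᵥ z ⬝ᵥ W *ᵥ z) :=
    calc (V * Vᵀ).trace = (V * Wᵀ).trace := by
          have hVt : Vᵀ = Wᵀ - (z ⬝ᵥ z)⁻¹ • vecMulVec z (W *ᵥ z) := by
            rw [hV, transpose_sub, transpose_smul, transpose_vecMulVec]
          rw [hVt, Matrix.mul_sub, Matrix.mul_smul, mul_vecMulVec, hVz]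
          simp
      _ = _ := by
          rw [hV, Matrix.sub_mul, Matrix.smul_mul, vecMulVec_mul, vecMul_transpose, trace_sub,
            trace_smul, trace_vecMulVec, smul_eq_mul]
  have hle : (z ⬝ᵥ z)⁻¹ * (W *ᵥ z ⬝ᵥ W *ᵥ z) ≤ 0 := by linarith
  have hpos : 0 < (z ⬝ᵥ z)⁻¹ := inv_pos.2 (hzz.lt_of_le' (dotProduct_self_star_nonneg z))
  exact dotProduct_self_eq_zero.1
    (le_antisymm (nonpos_of_mul_nonpos_right hle hpos) (dotProduct_self_star_nonneg _))

end IsMinNormMinimizer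

end Loss

section Whitening

variable {p D : ℕ} {ι : Type*} [Fintype ι] {P E : Matrix (Fin D) (Fin D) ℝ}
  {W : Matrix (Fin p) (Fin D) ℝ} {H : Matrix ι (Fin D) ℝ} {l : ι → ℝ}

lemma dotProduct_mulVec_row_le_one (hE : E.PosSemidef) (hW : W * (Hᵀ * H + E) * Wᵀ = 1) (j : ι) :
    W *ᵥ H j ⬝ᵥ W *ᵥ H j ≤ 1 := by
  classical
  have hres : 1 - W * Hᵀ * (W * Hᵀ)ᴴ = W * E * Wᴴ := by
    rw [← hW]
    simp [Matrix.mul_add, Matrix.add_mul, Matrix.mul_assoc]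
  have hpsd := (posSemidef_one_sub_mul_conjTranspose_comm (W * Hᵀ)).1
    (hres ▸ hE.mul_mul_conjTranspose_same W)
  have hdiag := hpsd.diag_nonneg (i := j)
  rw [Matrix.sub_apply, one_apply_eq] at hdiag
  exact sub_nonneg.1 hdiag

lemma sum_dotProduct_mulVec_row_add_trace (hW : W * (Hᵀ * H + E) * Wᵀ = 1) :
    ∑ j, W *ᵥ H j ⬝ᵥ W *ᵥ H j + (W * E * Wᵀ).trace = p := by
  have htrace := congrArg trace hW
  rw [trace_one, Fintype.card_fin, Matrix.mul_add, Matrix.add_mul, trace_add] at htrace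
  rw [← htrace]
  congr 1
  change ((W * Hᵀ)ᵀ * (W * Hᵀ)).trace = _
  rw [trace_mul_comm]
  simp [Matrix.mul_assoc]

variable [DecidableEq ι]

lemma exists_mul_diagonal_mul_transpose_eq_one (hl : ∀ j, l j ≠ 0) {T : Finset ι}
    (hT : T.card = p) : ∃ C : Matrix (Fin p) ι ℝ,
      C * (diagonal l * diagonal l) * Cᵀ = 1 ∧
        (C * diagonal l * Cᵀ).trace = ∑ j ∈ T, (l j)⁻¹ := by
  let e : Fin p ≃ T := (T.equivFinOfCardEq hT).symm
  let f : Fin p → ι := fun r => e r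
  have hf : Function.Injective f := Subtype.val_injective.comp e.injective
  have hconj : ∀ a : ι → ℝ, (diagonal l⁻¹).submatrix f id * diagonal a *
      ((diagonal l⁻¹).submatrix f id)ᵀ = diagonal fun r => (l (f r))⁻¹ * a (f r) * (l (f r))⁻¹ := by
    intro a
    rw [transpose_submatrix, diagonal_transpose, ← submatrix_id_id (diagonal a),
      ← submatrix_mul _ _ f id id Function.bijective_id,
      ← submatrix_mul _ _ f id f Function.bijective_id, diagonal_mul_diagonal,
      diagonal_mul_diagonal, submatrix_diagonal _ f hf]
    rfl
  refine ⟨(diagonal l⁻¹).submatrix f id, ?_, ?_⟩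
  · rw [diagonal_mul_diagonal, hconj, ← diagonal_one]
    congr 1
    funext r
    field_simp [hl (f r)]
  · rw [hconj, trace_diagonal, ← Finset.sum_coe_sort T, ← e.sum_comp]
    exact Finset.sum_congr rfl fun r _ => by simp [f, hl (e r)]

lemma whitening_gram_add_residual (hH : H * Hᵀ = diagonal l) (hEH : E * Hᵀ = 0)
    {C : Matrix (Fin p) ι ℝ} (hC : C * (diagonal l * diagonal l) * Cᵀ = 1) :
    C * H * (Hᵀ * H + E) * (C * H)ᵀ = 1 := by
  calc C * H * (Hᵀ * H + E) * (C * H)ᵀ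
      = C * ((H * Hᵀ) * (H * Hᵀ) + H * (E * Hᵀ)) * Cᵀ := by
        simp only [transpose_mul, Matrix.mul_assoc, Matrix.mul_add, Matrix.add_mul]
    _ = 1 := by rw [hH, hEH, Matrix.mul_zero, add_zero, hC]

namespace IsMinNormMinimizer

lemma whitens_and_trace_le (hW : IsMinNormMinimizer P (Hᵀ * H + E) W) (hH : H * Hᵀ = diagonal l)
    (hl : ∀ j, l j ≠ 0) (hE : E.PosSemidef) (hEH : E * Hᵀ = 0)
    (hgap : (Hᵀ * H + E - P).PosSemidef) (hgapH : (Hᵀ * H + E - P) * Hᵀ = 0) {T : Finset ι}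
    (hT : T.card = p) :
    W * (Hᵀ * H + E) * Wᵀ = 1 ∧ (W * Wᵀ).trace ≤ ∑ j ∈ T, (l j)⁻¹ := by
  have hM : (Hᵀ * H + E)ᵀ = Hᵀ * H + E := by
    have hE_symm : Eᵀ = E := by
      simpa [IsHermitian, conjTranspose_eq_transpose_of_trivial] using hE.isHermitian
    simp [hE_symm]
  obtain ⟨C, hC, hCtrace⟩ := exists_mul_diagonal_mul_transpose_eq_one hl hT
  have hloss : CLTraceLoss P (Hᵀ * H + E) (C * H) = -p :=
    CLTraceLoss_eq_neg_natCast hM (whitening_gram_add_residual hH hEH hC)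
      (by rw [transpose_mul, ← Matrix.mul_assoc, hgapH, Matrix.zero_mul])
  refine ⟨mul_mul_transpose_eq_one_of_CLTraceLoss_le hM hgap (hloss ▸ hW.1 _), ?_⟩
  calc (W * Wᵀ).trace ≤ (C * H * (C * H)ᵀ).trace :=
        hW.trace_mul_transpose_le (hloss ▸ neg_natCast_le_CLTraceLoss hM hgap W)
    _ = ∑ j ∈ T, (l j)⁻¹ := by
        rw [← hCtrace, ← hH]
        simp only [transpose_mul, Matrix.mul_assoc]

end IsMinNormMinimizer

lemma trace_mul_diagonal_mul_transpose {κ : Type*} [Fintype κ] (B : Matrix κ ι ℝ) (a : ι → ℝ) :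
    (B * diagonal a * Bᵀ).trace = ∑ j, a j * (Bᵀ * B) j j := by
  rw [Matrix.mul_assoc, trace_mul_comm, Matrix.mul_assoc]
  simp [trace]

lemma sum_inv_mul_dotProduct_mulVec_row_add_le_trace {s : ℝ} (hH : H * Hᵀ = diagonal l)
    (hl : ∀ j, l j ≠ 0) (hEH : E * Hᵀ = 0) (hs : 0 < s) (hEs : (s • 1 - E).PosSemidef)
    (W : Matrix (Fin p) (Fin D) ℝ) :
    ∑ j, (l j)⁻¹ * (W *ᵥ H j ⬝ᵥ W *ᵥ H j) + s⁻¹ * (W * E * Wᵀ).trace ≤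
      (W * Wᵀ).trace := by
  have hnonneg := trace_mul_mul_transpose_nonneg
    (posSemidef_rowComplement_sub_smul hH hl hEH hs hEs) W
  have hproj : (W * (Hᵀ * diagonal l⁻¹ * H) * Wᵀ).trace =
      ∑ j, (l j)⁻¹ * (W *ᵥ H j ⬝ᵥ W *ᵥ H j) := by
    refine Eq.trans ?_ (trace_mul_diagonal_mul_transpose (W * Hᵀ) l⁻¹)
    simp [Matrix.mul_assoc]
  rw [rowComplement, Matrix.mul_sub, Matrix.mul_sub, Matrix.sub_mul, Matrix.sub_mul,
    Matrix.mul_one, Matrix.mul_smul, Matrix.smul_mul, trace_sub, trace_sub, trace_smul, hproj,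
    smul_eq_mul] at hnonneg
  linarith

-- The residual mass of `W` costs at least `(l o)⁻¹` per unit, so it is charged to the direction `o`
-- in the linear program over the masses `‖W (H j)‖²`.
theorem IsMinNormMinimizer.mulVec_row_eq_zero (hW : IsMinNormMinimizer P (Hᵀ * H + E) W)
    (hH : H * Hᵀ = diagonal l) (hl : ∀ j, 0 < l j) (hE : E.PosSemidef) (hEH : E * Hᵀ = 0)
    (hgap : (Hᵀ * H + E - P).PosSemidef) (hgapH : (Hᵀ * H + E - P) * Hᵀ = 0) {o : ι}
    (hEo : (l o • 1 - E).PosSemidef)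
    (hp : p ≤ (Finset.univ.filter fun j => l o < l j).card) : W *ᵥ H o = 0 := by
  have hl0 : ∀ j, l j ≠ 0 := fun j => (hl j).ne'
  obtain ⟨T, hTcard, hTo, hT⟩ := exists_card_eq_lt_forall_notMem_le l o hp
  obtain ⟨hwhite, hnorm⟩ := hW.whitens_and_trace_le hH hl0 hE hEH hgap hgapH hTcard
  set mass : ι → ℝ := fun j => W *ᵥ H j ⬝ᵥ W *ᵥ H j
  have hmass_nonneg : 0 ≤ mass := fun j => dotProduct_self_star_nonneg (W *ᵥ H j)
  have hres_nonneg : 0 ≤ (W * E * Wᵀ).trace := trace_mul_mul_transpose_nonneg hE W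
  have hoT : o ∉ T := fun h => (hTo o h).false
  have hcharge : mass o + (W * E * Wᵀ).trace = 0 := by
    have := eq_zero_of_sum_mul_le_sum (a := fun j => (l j)⁻¹)
      (c := mass + Pi.single o (W * E * Wᵀ).trace) (T := T) (o := o)
      (fun j => add_nonneg hmass_nonneg (Pi.single_nonneg.2 hres_nonneg) j)
      (fun j hj => by
        simpa [ne_of_mem_of_not_mem hj hoT] using dotProduct_mulVec_row_le_one hE hwhite j)
      (by simpa [Finset.sum_add_distrib, hTcard] using
        sum_dotProduct_mulVec_row_add_trace hwhite)
      (fun i hi j hj => inv_anti₀ (hl j) (hT i hi j hj))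
      (fun i hi => inv_strictAnti₀ (hl o) (hTo i hi))
      (by
        simpa [mul_add, Finset.sum_add_distrib, Pi.single_apply] using
          (sum_inv_mul_dotProduct_mulVec_row_add_le_trace hH hl0 hEH (hl o) hEo W).trans hnorm)
    simpa using this
  exact dotProduct_self_eq_zero.1
    ((add_eq_zero_iff_of_nonneg (hmass_nonneg o) hres_nonneg).1 hcharge).1

end Whitening

/-- Data `x i = ∑ j, signal j i • amplitude j • feature j + noiseLevel • noise i` with orthonormal
feature and noise directions. The signals are normalized to have mean square one over the samples,
so that all magnitudes are carried by `amplitude`. -/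
structure FeatureModel (ι I d : Type*) [Fintype ι] [Fintype I] [Fintype d] [DecidableEq ι]
    [DecidableEq I] where
  feature : Matrix ι d ℝ
  noise : Matrix I d ℝ
  signal : Matrix ι I ℝ
  amplitude : ι → ℝ
  noiseLevel : ℝ
  feature_mul_transpose : feature * featureᵀ = 1
  noise_mul_transpose : noise * noiseᵀ = 1
  feature_mul_noise_transpose : feature * noiseᵀ = 0
  signal_mul_transpose : signal * signalᵀ = (Fintype.card I : ℝ) • 1
  noiseLevel_pos : 0 < noiseLevel

namespace FeatureModel

section SecondMoment

variable {ι I d : Type*} [Fintype ι] [Fintype I] [Fintype d] [DecidableEq ι] [DecidableEq I]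
  (S : FeatureModel ι I d)

local notation "N" => (Fintype.card I : ℝ)

/-- The matrix whose rows are the samples. -/
def samples : Matrix I d ℝ :=
  S.signalᵀ * diagonal S.amplitude * S.feature + S.noiseLevel • S.noise

/-- The empirical second-moment matrix of the samples. -/
noncomputable def secondMoment : Matrix d d ℝ := N⁻¹ • (S.samplesᵀ * S.samples)

/-- The correlations of the samples with each signal; its rows are eigenvectors of the second
moment. -/
noncomputable def signalDirection : Matrix ι d ℝ :=
  diagonal S.amplitude * S.feature + (S.noiseLevel / N) • (S.signal * S.noise)

/-- The eigenvalue of the second moment belonging to each signal direction, which is also the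
squared norm of that direction. -/
noncomputable def eigenvalue (j : ι) : ℝ := S.amplitude j ^ 2 + S.noiseLevel ^ 2 / N

/-- The part of the second moment carried by noise uncorrelated with all signals. -/
noncomputable def residual : Matrix d d ℝ :=
  S.secondMoment - S.signalDirectionᵀ * S.signalDirection

/-- Directions orthogonal to every sample, each in the span of a feature and its signal's noise. -/
def kernelDirection : Matrix ι d ℝ :=
  S.noiseLevel • S.feature - diagonal S.amplitude * (S.signal * S.noise)

lemma samples_mul_feature_transpose :
    S.samples * S.featureᵀ = S.signalᵀ * diagonal S.amplitude := by
  have hZV : S.noise * S.featureᵀ = 0 := by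
    simpa using congrArg transpose S.feature_mul_noise_transpose
  rw [samples, Matrix.add_mul, Matrix.mul_assoc, S.feature_mul_transpose, Matrix.smul_mul, hZV,
    Matrix.mul_one, smul_zero, add_zero]

lemma samples_mul_noise_transpose : S.samples * S.noiseᵀ = S.noiseLevel • 1 := by
  rw [samples, Matrix.add_mul, Matrix.mul_assoc, S.feature_mul_noise_transpose, Matrix.smul_mul,
    S.noise_mul_transpose, Matrix.mul_zero, zero_add]

lemma samples_mul_signalDirection_transpose :
    S.samples * S.signalDirectionᵀ = S.signalᵀ * diagonal S.eigenvalue := by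
  have hl : diagonal S.eigenvalue =
      diagonal S.amplitude * diagonal S.amplitude + (S.noiseLevel ^ 2 / N) • 1 := by
    rw [smul_one_eq_diagonal, diagonal_mul_diagonal, diagonal_add]
    congr 1
    funext j
    rw [eigenvalue, sq]
  calc S.samples * S.signalDirectionᵀ
      = S.samples * S.featureᵀ * diagonal S.amplitude +
          (S.noiseLevel / N) • (S.samples * S.noiseᵀ * S.signalᵀ) := by
        simp [signalDirection, Matrix.mul_add, Matrix.mul_assoc]
    _ = S.signalᵀ * diagonal S.eigenvalue := by
        rw [samples_mul_feature_transpose, samples_mul_noise_transpose, hl, Matrix.mul_add,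
          Matrix.mul_assoc, Matrix.smul_mul, smul_smul, Matrix.one_mul, Matrix.mul_smul,
          Matrix.mul_one, div_mul_eq_mul_div, sq]

lemma samples_mul_kernelDirection_transpose : S.samples * S.kernelDirectionᵀ = 0 := by
  calc S.samples * S.kernelDirectionᵀ
      = S.noiseLevel • (S.samples * S.featureᵀ) -
          S.samples * S.noiseᵀ * S.signalᵀ * diagonal S.amplitude := by
        simp [kernelDirection, Matrix.mul_sub, Matrix.mul_assoc]
    _ = 0 := by
        rw [samples_mul_feature_transpose, samples_mul_noise_transpose, Matrix.smul_mul,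
          Matrix.one_mul, Matrix.smul_mul, sub_self]

lemma eigenvalue_smul_feature (j : ι) : S.eigenvalue j • S.feature j =
    S.amplitude j • S.signalDirection j + (S.noiseLevel / N) • S.kernelDirection j := by
  funext t
  simp only [eigenvalue, signalDirection, kernelDirection, Pi.smul_apply, Pi.add_apply,
    Matrix.add_apply, Matrix.sub_apply, Matrix.smul_apply, diagonal_mul, smul_eq_mul]
  ring

lemma secondMoment_eq : S.secondMoment =
    S.signalDirectionᵀ * S.signalDirection + S.residual :=
  (add_sub_cancel _ _).symm

lemma secondMoment_transpose : S.secondMomentᵀ = S.secondMoment := by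
  simp [secondMoment]

variable [Nonempty I]

lemma eigenvalue_pos (j : ι) : 0 < S.eigenvalue j := by
  have := S.noiseLevel_pos
  rw [eigenvalue]
  positivity

lemma signal_mul_samples : S.signal * S.samples = N • S.signalDirection := by
  have hN : N ≠ 0 := by positivity
  rw [samples, signalDirection, Matrix.mul_add, ← Matrix.mul_assoc, ← Matrix.mul_assoc,
    S.signal_mul_transpose, smul_add, smul_smul, mul_div_cancel₀ _ hN]
  simp

lemma signalDirection_mul_transpose :
    S.signalDirection * S.signalDirectionᵀ = diagonal S.eigenvalue := by
  have hN : N ≠ 0 := by positivity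
  have h : N • (S.signalDirection * S.signalDirectionᵀ) = N • diagonal S.eigenvalue := by
    rw [← Matrix.smul_mul, ← signal_mul_samples, Matrix.mul_assoc,
      samples_mul_signalDirection_transpose, ← Matrix.mul_assoc, S.signal_mul_transpose,
      Matrix.smul_mul, Matrix.one_mul]
  exact smul_right_injective _ hN h

lemma residual_eq : S.residual =
    N⁻¹ • (S.samplesᵀ * (1 - N⁻¹ • (S.signalᵀ * S.signal)) * S.samples) := by
  have hN : N ≠ 0 := by positivity
  have hgram : S.samplesᵀ * (S.signalᵀ * S.signal) * S.samples =
      (N * N) • (S.signalDirectionᵀ * S.signalDirection) := by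
    calc S.samplesᵀ * (S.signalᵀ * S.signal) * S.samples
        = (S.signal * S.samples)ᵀ * (S.signal * S.samples) := by simp [Matrix.mul_assoc]
      _ = _ := by rw [signal_mul_samples]; simp [smul_smul]
  rw [residual, secondMoment, Matrix.mul_sub, Matrix.sub_mul, Matrix.mul_smul, Matrix.smul_mul,
    hgram, smul_smul, smul_sub, smul_smul, Matrix.mul_one]
  field_simp
  simp

lemma posSemidef_one_sub_smul_signal : (1 - N⁻¹ • (S.signalᵀ * S.signal)).PosSemidef :=
  posSemidef_one_sub_smul_transpose_mul_self S.signal_mul_transpose (by positivity)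

lemma one_sub_smul_signal_mul_signal_transpose :
    (1 - N⁻¹ • (S.signalᵀ * S.signal)) * S.signalᵀ = 0 := by
  have hN : N ≠ 0 := by positivity
  rw [Matrix.sub_mul, Matrix.smul_mul, Matrix.mul_assoc, S.signal_mul_transpose]
  simp [smul_smul, hN]

lemma residual_posSemidef : S.residual.PosSemidef := by
  rw [residual_eq]
  simpa only [conjTranspose_eq_transpose_of_trivial] using
    (S.posSemidef_one_sub_smul_signal.conjTranspose_mul_mul_same S.samples).smul
      (show (0 : ℝ) ≤ N⁻¹ by positivity)

lemma residual_mul_signalDirection_transpose : S.residual * S.signalDirectionᵀ = 0 := by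
  rw [residual_eq, Matrix.smul_mul, Matrix.mul_assoc, samples_mul_signalDirection_transpose,
    Matrix.mul_assoc, ← Matrix.mul_assoc (1 - _), one_sub_smul_signal_mul_signal_transpose]
  simp

lemma residual_eq_noise : S.residual = (S.noiseLevel ^ 2 / N) •
    (S.noiseᵀ * (1 - N⁻¹ • (S.signalᵀ * S.signal)) * S.noise) := by
  set Q := 1 - N⁻¹ • (S.signalᵀ * S.signal) with hQ
  have hQF : Q * S.signalᵀ = 0 := S.one_sub_smul_signal_mul_signal_transpose
  have hQX : Q * S.samples = S.noiseLevel • (Q * S.noise) := by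
    rw [samples, Matrix.mul_add, ← Matrix.mul_assoc, ← Matrix.mul_assoc, hQF]
    simp
  have hXQ : S.samplesᵀ * Q = S.noiseLevel • (S.noiseᵀ * Q) := by
    simpa [hQ] using congrArg transpose hQX
  rw [residual_eq, hXQ, Matrix.smul_mul, Matrix.mul_assoc, hQX, Matrix.mul_smul,
    smul_smul, smul_smul, ← Matrix.mul_assoc]
  congr 1
  ring

lemma posSemidef_eigenvalue_smul_sub_residual [DecidableEq d] (j : ι) :
    (S.eigenvalue j • 1 - S.residual).PosSemidef := by
  have hN : 0 ≤ N⁻¹ := by positivity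
  have hs : 0 ≤ S.noiseLevel ^ 2 / N := by positivity
  have hnoise : (1 - S.noiseᵀ * S.noise).PosSemidef := by
    simpa using posSemidef_one_sub_smul_transpose_mul_self (c := 1)
      (S.noise_mul_transpose.trans (one_smul ℝ _).symm) one_ne_zero
  have hsignal := posSemidef_conjTranspose_mul_self (S.signal * S.noise)
  convert (PosSemidef.one.smul (sq_nonneg (S.amplitude j))).add
    ((hnoise.add (hsignal.smul hN)).smul hs) using 1
  rw [residual_eq_noise, eigenvalue, conjTranspose_eq_transpose_of_trivial]
  simp only [transpose_mul, Matrix.mul_sub, Matrix.sub_mul, Matrix.mul_one, Matrix.mul_smul,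
    Matrix.smul_mul, Matrix.mul_assoc, add_smul, smul_add, smul_sub]
  abel

end SecondMoment

variable {ι I : Type*} [Fintype ι] [Fintype I] [DecidableEq ι] [DecidableEq I] {p D : ℕ}
  (S : FeatureModel ι I (Fin D))

lemma mulVec_feature_eq_zero [Nonempty I] {B : Matrix I I ℝ} (hB : (1 - B).PosSemidef)
    (hBsignal : B * S.signalᵀ = S.signalᵀ) {W : Matrix (Fin p) (Fin D) ℝ}
    (hW : IsMinNormMinimizer ((Fintype.card I : ℝ)⁻¹ • (S.samplesᵀ * B * S.samples))
      S.secondMoment W) {o : ι}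
    (hp : p ≤ (Finset.univ.filter fun j => S.amplitude o ^ 2 < S.amplitude j ^ 2).card) :
    W *ᵥ S.feature o = 0 := by
  set P := (Fintype.card I : ℝ)⁻¹ • (S.samplesᵀ * B * S.samples) with hP
  have hgap : S.secondMoment - P =
      (Fintype.card I : ℝ)⁻¹ • (S.samplesᵀ * (1 - B) * S.samples) := by
    simp [hP, secondMoment, Matrix.mul_sub, Matrix.sub_mul, smul_sub]
  have hgap_psd : (S.secondMoment - P).PosSemidef := by
    rw [hgap]
    simpa only [conjTranspose_eq_transpose_of_trivial] using
      (hB.conjTranspose_mul_mul_same S.samples).smul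
        (show (0 : ℝ) ≤ (Fintype.card I : ℝ)⁻¹ by positivity)
  have hgap_dir : (S.secondMoment - P) * S.signalDirectionᵀ = 0 := by
    rw [hgap, Matrix.smul_mul, Matrix.mul_assoc, samples_mul_signalDirection_transpose,
      Matrix.mul_assoc, ← Matrix.mul_assoc (1 - B), Matrix.sub_mul, hBsignal]
    simp
  have hdir : W *ᵥ S.signalDirection o = 0 := by
    rw [S.secondMoment_eq] at hW hgap_psd hgap_dir
    exact hW.mulVec_row_eq_zero S.signalDirection_mul_transpose S.eigenvalue_pos
      S.residual_posSemidef S.residual_mul_signalDirection_transpose hgap_psd hgap_dir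
      (S.posSemidef_eigenvalue_smul_sub_residual o) (by simpa [eigenvalue] using hp)
  have hker : W *ᵥ S.kernelDirection o = 0 := by
    have hX : S.samples *ᵥ S.kernelDirection o = 0 :=
      congrFun (congrArg transpose S.samples_mul_kernelDirection_transpose) o
    have hBsymm : Bᵀ = B := by
      simpa [IsHermitian, conjTranspose_eq_transpose_of_trivial] using hB.isHermitian
    have hPsymm : Pᵀ = P := by simp [hP, hBsymm, Matrix.mul_assoc]
    refine hW.mulVec_eq_zero_of_mulVec_eq_zero S.secondMoment_transpose hPsymm ?_ ?_
    · rw [secondMoment, smul_mulVec, ← mulVec_mulVec, hX, mulVec_zero, smul_zero]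
    · rw [hP, smul_mulVec, ← mulVec_mulVec, hX, mulVec_zero, smul_zero]
  have hzero : S.eigenvalue o • W *ᵥ S.feature o = 0 := by
    rw [← mulVec_smul, eigenvalue_smul_feature, mulVec_add, mulVec_smul, mulVec_smul, hdir, hker,
      smul_zero, smul_zero, add_zero]
  exact (smul_eq_zero.1 hzero).resolve_left (S.eigenvalue_pos o).ne'

end FeatureModel

section Averaging

lemma sum_vecMulVec_self {I d : Type*} [Fintype I] (x : I → d → ℝ) :
    ∑ i, vecMulVec (x i) (x i) = (of x)ᵀ * of x := by
  ext s t
  simp [Matrix.sum_apply, vecMulVec_apply, mul_apply]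

variable {I L : Type*} [Fintype I] [DecidableEq L] {b : I → L} {m : ℕ}

/-- The averaging operator over the blocks of the partition of `I` into the fibres of `b`, each of
which is meant to have `m` elements. -/
noncomputable def blockAverage (b : I → L) (m : ℕ) : Matrix L I ℝ :=
  of fun l i => if b i = l then (m : ℝ)⁻¹ else 0

lemma blockAverage_mul_transpose (hm : m ≠ 0)
    (hb : ∀ l, (Finset.univ.filter fun i => b i = l).card = m) :
    blockAverage b m * (blockAverage b m)ᵀ = (m : ℝ)⁻¹ • 1 := by
  ext l l'
  rcases eq_or_ne l l' with rfl | hll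
  · have hsq : ∀ i, blockAverage b m l i * blockAverage b m l i =
        if b i = l then (m : ℝ)⁻¹ * (m : ℝ)⁻¹ else 0 := fun i => by
      by_cases hi : b i = l <;> simp [blockAverage, hi]
    simp [mul_apply, hsq, Finset.sum_ite, hb, hm]
  · rw [mul_apply, Matrix.smul_apply, one_apply_ne hll, smul_zero]
    refine Finset.sum_eq_zero fun i _ => ?_
    by_cases hi : b i = l
    · simp [blockAverage, hi, hll]
    · simp [blockAverage, hi]

lemma blockAverage_transpose_mul_self_mul_transpose [Fintype L] {ι : Type*} {F : Matrix ι I ℝ}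
    (hm : m ≠ 0) (hb : ∀ l, (Finset.univ.filter fun i => b i = l).card = m)
    (hF : ∀ i i', b i = b i' → ∀ j, F j i = F j i') :
    (m : ℝ) • ((blockAverage b m)ᵀ * blockAverage b m) * Fᵀ = Fᵀ := by
  have hm' : (m : ℝ) ≠ 0 := Nat.cast_ne_zero.2 hm
  have havg : ∀ i j, (blockAverage b m * Fᵀ) (b i) j = F j i := by
    intro i j
    calc (blockAverage b m * Fᵀ) (b i) j
        = ∑ i' ∈ Finset.univ.filter (fun i' => b i' = b i), (m : ℝ)⁻¹ * F j i' := by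
          simp [blockAverage, mul_apply, Finset.sum_filter]
      _ = ∑ _i' ∈ Finset.univ.filter (fun i' => b i' = b i), (m : ℝ)⁻¹ * F j i :=
          Finset.sum_congr rfl fun i' hi' => by rw [hF i' i (Finset.mem_filter.1 hi').2]
      _ = F j i := by simp [hb, hm']
  have hspread : ∀ (G : Matrix L ι ℝ) i j,
      ((blockAverage b m)ᵀ * G) i j = (m : ℝ)⁻¹ * G (b i) j := by
    simp [blockAverage, mul_apply]
  ext i j
  rw [Matrix.smul_mul, Matrix.mul_assoc, Matrix.smul_apply, hspread, havg, smul_eq_mul,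
    mul_inv_cancel_left₀ hm', transpose_apply]

lemma card_eq_mul_card_of_card_filter_eq [Fintype L]
    (hb : ∀ l, (Finset.univ.filter fun i => b i = l).card = m) :
    Fintype.card I = m * Fintype.card L := by
  rw [← Finset.card_univ, Finset.card_eq_sum_card_fiberwise fun i _ => Finset.mem_univ (b i)]
  simp [hb, mul_comm]

-- Averaging over the blocks fixes the signals, so it does not move the second moment along their
-- directions.
lemma FeatureModel.mulVec_feature_eq_zero_of_blockAverage [Fintype L] [DecidableEq I] [Nonempty I]
    {ι : Type*} [Fintype ι] [DecidableEq ι] {p D : ℕ} (S : FeatureModel ι I (Fin D)) (hm : m ≠ 0)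
    (hb : ∀ l, (Finset.univ.filter fun i => b i = l).card = m)
    (hS : ∀ i i', b i = b i' → ∀ j, S.signal j i = S.signal j i')
    {W : Matrix (Fin p) (Fin D) ℝ}
    (hW : IsMinNormMinimizer ((Fintype.card L : ℝ)⁻¹ •
      ((blockAverage b m * S.samples)ᵀ * (blockAverage b m * S.samples))) S.secondMoment W) {o : ι}
    (hp : p ≤ (Finset.univ.filter fun j => S.amplitude o ^ 2 < S.amplitude j ^ 2).card) :
    W *ᵥ S.feature o = 0 := by
  have hm' : (m : ℝ) ≠ 0 := Nat.cast_ne_zero.2 hm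
  have hpsd := posSemidef_one_sub_smul_transpose_mul_self (blockAverage_mul_transpose hm hb)
    (inv_ne_zero hm')
  rw [inv_inv] at hpsd
  refine S.mulVec_feature_eq_zero hpsd (blockAverage_transpose_mul_self_mul_transpose hm hb hS) ?_
    hp
  convert hW using 1
  rw [card_eq_mul_card_of_card_filter_eq hb, transpose_mul, Matrix.mul_smul,
    Matrix.smul_mul, smul_smul, Nat.cast_mul, mul_comm (m : ℝ), mul_inv, inv_mul_cancel_right₀ hm']
  simp only [Matrix.mul_assoc]

variable {n : ℕ}

/-- The block containing `i` when `Fin (m * n)` is cut into `n` consecutive blocks of length `m`. -/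
def blockIndex (i : Fin (m * n)) : Fin n := (i.cast (mul_comm m n)).divNat

lemma val_blockIndex (i : Fin (m * n)) : (blockIndex i : ℕ) = i / m := rfl

lemma card_filter_blockIndex_eq (l : Fin n) :
    (Finset.univ.filter fun i : Fin (m * n) => blockIndex i = l).card = m := by
  let e : Fin n × Fin m ≃ Fin (m * n) := finProdFinEquiv.trans (finCongr (mul_comm n m))
  have he : ∀ i, (e.symm i).1 = blockIndex i := fun i => rfl
  calc (Finset.univ.filter fun i : Fin (m * n) => blockIndex i = l).card
      = (({l} : Finset (Fin n)) ×ˢ (Finset.univ : Finset (Fin m))).card :=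
        Finset.card_equiv e.symm fun i => by
          rw [Finset.mem_filter, Finset.mem_product, he]
          simp
    _ = m := by simp

lemma blockAverage_blockIndex_mul {d : Type*} (x : Fin (m * n) → d → ℝ) :
    blockAverage (blockIndex (m := m) (n := n)) m * of x = of fun l : Fin n =>
      (m : ℝ)⁻¹ • ∑ i, Set.indicator {i : Fin (m * n) | (i : ℕ) / m = l} x i := by
  ext l t
  rw [mul_apply, of_apply, Pi.smul_apply, Finset.sum_apply, smul_eq_mul, Finset.mul_sum]
  refine Finset.sum_congr rfl fun i _ => ?_
  by_cases h : (i : ℕ) / m = l <;> simp [blockAverage, Fin.ext_iff, val_blockIndex, h]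

end Averaging

section Dataset

/-- A label `(y, y_sub, ρ, k)`. -/
abbrev Label : Type := ℝ × ℝ × ℝ × ℕ

/-- The labels occurring in a structured dataset whose features are numbered `1, …, K`. -/
noncomputable def labels (K : ℕ) : Finset Label :=
  {1, -1} ×ˢ {1, -1} ×ˢ {1, -1} ×ˢ Finset.Icc 3 K

/-- Every possible label is attained by the same number of samples. -/
def IsBalanced {I : Type*} [Fintype I] (K : ℕ) (g : I → Label) : Prop :=
  (∀ i, g i ∈ labels K) ∧
    ∀ z ∈ labels K, 8 * (K - 2) * (Finset.univ.filter fun i => g i = z).card = Fintype.card I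

/-- The coefficient of `v_j` in a sample, scaled to have mean square one over the labels: `v_j` with
`j ≥ 3` occurs in a fraction `1 / (K - 2)` of the samples. -/
noncomputable def labelSignal (K : ℕ) : ℕ → Label → ℝ
  | 0, _ => 1
  | 1, z => z.1
  | 2, z => z.2.1
  | j + 3, z => if z.2.2.2 = j + 3 then √((K : ℝ) - 2) * z.2.2.1 else 0

/-- The root mean square of the coefficient of `v_j`. -/
noncomputable def labelAmplitude (K : ℕ) (φ : ℕ → ℝ) : ℕ → ℝ
  | 0 => 1
  | 1 => φ 1
  | 2 => φ 2
  | j + 3 => φ (j + 3) / √((K : ℝ) - 2)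

lemma sum_labels_labelSignal_mul {K j k : ℕ} (hK : 3 ≤ K) (hj : j ≤ K) (hk : k ≤ K) :
    ∑ z ∈ labels K, labelSignal K j z * labelSignal K k z =
      if j = k then ((8 * (K - 2) : ℕ) : ℝ) else 0 := by
  obtain ⟨K, rfl⟩ := Nat.exists_eq_add_of_le' hK
  have hne : (1 : ℝ) ∉ ({-1} : Finset ℝ) := by norm_num
  have hsqrt : √((K + 3 : ℕ) - 2 : ℝ) ^ 2 = K + 1 := by
    rw [Real.sq_sqrt] <;> push_cast <;> linarith [(K.cast_nonneg : (0 : ℝ) ≤ K)]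
  have hclasses : ((K + 3 + 1 - 3 : ℕ) : ℝ) = K + 1 := by norm_cast
  have hlabels : ((8 * (K + 3 - 2) : ℕ) : ℝ) = 8 * (K + 1) := by norm_cast
  have hclass : ∀ {i}, i + 3 ≤ K + 3 → i + 3 ∈ Finset.Icc 3 (K + 3) := fun hi => by simpa using hi
  simp only [labels, Finset.sum_product, Finset.sum_insert hne, Finset.sum_singleton, hlabels]
  rcases j with _ | _ | _ | j <;> rcases k with _ | _ | _ | k
  all_goals
    simp only [labelSignal, mul_ite, ite_mul, zero_mul, mul_zero, Finset.sum_const,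
      Finset.sum_ite_eq', hclass, hj, hk, if_true, nsmul_eq_mul, Nat.card_Icc, hclasses]
  all_goals grind

variable {I : Type*} [Fintype I] {K : ℕ} {g : I → Label}

lemma IsBalanced.sum_labelSignal_mul (hg : IsBalanced K g) (hK : 3 ≤ K) {j k : ℕ} (hj : j ≤ K)
    (hk : k ≤ K) : ∑ i, labelSignal K j (g i) * labelSignal K k (g i) =
      if j = k then (Fintype.card I : ℝ) else 0 := by
  have hcard : ∀ z ∈ labels K, ((Finset.univ.filter fun i => g i = z).card : ℝ) =
      Fintype.card I / (8 * (K - 2) : ℕ) := by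
    intro z hz
    have hK' : ((8 * (K - 2) : ℕ) : ℝ) ≠ 0 := Nat.cast_ne_zero.2 (by omega)
    rw [eq_div_iff hK', mul_comm, ← hg.2 z hz, Nat.cast_mul (8 * (K - 2))]
  calc ∑ i, labelSignal K j (g i) * labelSignal K k (g i)
      = ∑ z ∈ labels K, (Finset.univ.filter fun i => g i = z).card •
          (labelSignal K j z * labelSignal K k z) := by
        rw [← Finset.sum_fiberwise_of_maps_to' (fun i _ => hg.1 i)
          fun z => labelSignal K j z * labelSignal K k z]
        simp
    _ = Fintype.card I / (8 * (K - 2) : ℕ) *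
          ∑ z ∈ labels K, labelSignal K j z * labelSignal K k z := by
        rw [Finset.mul_sum]
        exact Finset.sum_congr rfl fun z hz => by rw [nsmul_eq_mul, hcard z hz]
    _ = if j = k then (Fintype.card I : ℝ) else 0 := by
        rw [sum_labels_labelSignal_mul hK hj hk]
        split_ifs
        · exact div_mul_cancel₀ _ (Nat.cast_ne_zero.2 (by omega))
        · simp

/-- The structured dataset with feature directions `v_0, …, v_K`, noise directions `v_{K+1}, …` and
labels `g`. -/
noncomputable def datasetModel {N D : ℕ} {g : Fin N → Label} (φ : ℕ → ℝ) {σ : ℝ} (hσ : 0 < σ)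
    {v : ℕ → Fin D → ℝ}
    (hv : ∀ i j, i ≤ K + N → j ≤ K + N → (∑ t, v i t * v j t) = if i = j then (1 : ℝ) else 0)
    (hK : 3 ≤ K) (hg : IsBalanced K g) : FeatureModel (Fin (K + 1)) (Fin N) (Fin D) where
  feature := of fun j => v j
  noise := of fun i => v (K + 1 + i)
  signal := of fun j i => labelSignal K j (g i)
  amplitude j := labelAmplitude K φ j
  noiseLevel := σ
  feature_mul_transpose := by
    ext j k
    simp [mul_apply, hv j k (by omega) (by omega), one_apply, Fin.ext_iff]
  noise_mul_transpose := by
    ext i k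
    simp [mul_apply, hv (K + 1 + i) (K + 1 + k) (by omega) (by omega), one_apply, Fin.ext_iff]
  feature_mul_noise_transpose := by
    ext j i
    simpa [mul_apply, show (j : ℕ) ≠ K + 1 + i by omega] using
      hv j (K + 1 + i) (by omega) (by omega)
  signal_mul_transpose := by
    ext j k
    simp [mul_apply, hg.sum_labelSignal_mul hK (Fin.is_le j) (Fin.is_le k), one_apply, Fin.ext_iff]
  noiseLevel_pos := hσ

variable {N D : ℕ} {g : Fin N → Label} {φ : ℕ → ℝ} {σ : ℝ} {v : ℕ → Fin D → ℝ}

lemma sum_labelSignal_mul_labelAmplitude (hK : 3 ≤ K) (φ : ℕ → ℝ) {z : Label} (hz : z ∈ labels K)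
    (w : ℕ → ℝ) : ∑ j ∈ Finset.range (K + 1), labelSignal K j z * labelAmplitude K φ j * w j =
      w 0 + z.1 * φ 1 * w 1 + z.2.1 * φ 2 * w 2 + z.2.2.1 * φ z.2.2.2 * w z.2.2.2 := by
  obtain ⟨k, rfl⟩ := Nat.exists_eq_add_of_le' hK
  obtain ⟨hcl, hcu⟩ : 3 ≤ z.2.2.2 ∧ z.2.2.2 ≤ k + 3 := by
    simpa [labels, Finset.mem_product] using (Finset.mem_product.1
      (Finset.mem_product.1 (Finset.mem_product.1 hz).2).2).2
  obtain ⟨c, hc⟩ := Nat.exists_eq_add_of_le' hcl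
  have hsqrt : √(((k + 3 : ℕ) : ℝ) - 2) ≠ 0 := by
    rw [Real.sqrt_ne_zero']
    push_cast
    linarith [(k.cast_nonneg : (0 : ℝ) ≤ k)]
  have htail : ∑ j ∈ Finset.range (k + 1), labelSignal (k + 3) (j + 3) z *
      labelAmplitude (k + 3) φ (j + 3) * w (j + 3) = z.2.2.1 * φ (c + 3) * w (c + 3) := by
    rw [Finset.sum_eq_single_of_mem c (Finset.mem_range.2 (by omega)) fun j _ hj => by
      simp [labelSignal, hc, hj.symm]]
    simp only [labelSignal, labelAmplitude, hc, if_true]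
    field_simp
  rw [Finset.sum_range_succ', Finset.sum_range_succ', Finset.sum_range_succ', htail, hc]
  simp only [labelSignal, labelAmplitude]
  ring

lemma datasetModel_samples (hσ : 0 < σ)
    (hv : ∀ i j, i ≤ K + N → j ≤ K + N → (∑ t, v i t * v j t) = if i = j then (1 : ℝ) else 0)
    (hK : 3 ≤ K) (hg : IsBalanced K g) :
    (datasetModel φ hσ hv hK hg).samples = of fun i t => v 0 t + (g i).1 * φ 1 * v 1 t +
      (g i).2.1 * φ 2 * v 2 t + (g i).2.2.1 * φ (g i).2.2.2 * v (g i).2.2.2 t +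
      σ * v (K + 1 + i) t := by
  ext i t
  rw [of_apply, ← sum_labelSignal_mul_labelAmplitude hK φ (hg.1 i) fun j => v j t,
    ← Fin.sum_univ_eq_sum_range fun j => labelSignal K j (g i) * labelAmplitude K φ j * v j t]
  simp only [FeatureModel.samples, datasetModel, Matrix.add_apply, mul_apply (N := of _),
    mul_diagonal, transpose_apply, of_apply, Matrix.smul_apply, smul_eq_mul]

lemma isBalanced_of_ncard {K : ℕ} {y ysub ρ : I → ℝ} {κ : I → ℕ}
    (hy : ∀ i, y i = 1 ∨ y i = -1) (hysub : ∀ i, ysub i = 1 ∨ ysub i = -1)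
    (hρ : ∀ i, ρ i = 1 ∨ ρ i = -1) (hκ : ∀ i, 3 ≤ κ i ∧ κ i ≤ K)
    (hdiv : 8 * (K - 2) ∣ Fintype.card I)
    (hbal : ∀ (a b r : ℝ) (c : ℕ), (a = 1 ∨ a = -1) → (b = 1 ∨ b = -1) → (r = 1 ∨ r = -1) →
      3 ≤ c → c ≤ K → Set.ncard {i | y i = a ∧ ysub i = b ∧ κ i = c ∧ ρ i = r} =
        Fintype.card I / (8 * (K - 2))) :
    IsBalanced K fun i => (y i, ysub i, ρ i, κ i) := by
  refine ⟨fun i => by simp [labels, hy i, hysub i, hρ i, hκ i], fun ⟨a, b, r, c⟩ hz => ?_⟩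
  simp only [labels, Finset.mem_product, Finset.mem_insert, Finset.mem_singleton,
    Finset.mem_Icc] at hz
  obtain ⟨ha, hb, hr, hc, hcK⟩ := hz
  have hset : {i | y i = a ∧ ysub i = b ∧ κ i = c ∧ ρ i = r} =
      (Finset.univ.filter fun i => (y i, ysub i, ρ i, κ i) = (a, b, r, c) : Finset I) := by
    ext i
    simp [and_comm (a := κ i = c)]
  rw [← Set.ncard_coe_finset, ← hset, hbal a b r c ha hb hr hc hcK, Nat.mul_div_cancel' hdiv]

lemma ncard_le_card_filter_labelAmplitude_lt {K : ℕ} (hK : 3 ≤ K) (φ : ℕ → ℝ) :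
    Set.ncard {j : ℕ | (j = 0 ∧ φ 1 ^ 2 < 1) ∨ (j = 2 ∧ φ 1 ^ 2 < φ 2 ^ 2) ∨
      (3 ≤ j ∧ j ≤ K ∧ φ 1 ^ 2 < φ j ^ 2 / ((K : ℝ) - 2))} ≤
    (Finset.univ.filter fun j : Fin (K + 1) =>
      labelAmplitude K φ 1 ^ 2 < labelAmplitude K φ j ^ 2).card := by
  rw [← Finset.card_map Fin.valEmbedding, ← Set.ncard_coe_finset]
  refine Set.ncard_le_ncard (fun j hj => ?_) (Finset.finite_toSet _)
  suffices ∃ h : j < K + 1, φ 1 ^ 2 < labelAmplitude K φ j ^ 2 by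
    obtain ⟨h, hlt⟩ := this
    exact Finset.mem_coe.2 (Finset.mem_map.2 ⟨⟨j, h⟩, by
      rwa [Finset.mem_filter_univ], rfl⟩)
  rcases hj with ⟨rfl, h⟩ | ⟨rfl, h⟩ | ⟨hj3, hjK, h⟩
  · exact ⟨by omega, by simpa [labelAmplitude] using h⟩
  · exact ⟨by omega, h⟩
  · obtain ⟨c, rfl⟩ := Nat.exists_eq_add_of_le' hj3
    have hK2 : (0 : ℝ) ≤ K - 2 := by
      linarith [show (3 : ℝ) ≤ K by exact_mod_cast hK]
    exact ⟨by omega, by rwa [labelAmplitude, div_pow, Real.sq_sqrt hK2]⟩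

end Dataset

theorem stmt_3
    (m K n D : ℕ)
    (hm : 1 ≤ m) (hK : 3 ≤ K) (hn : 1 ≤ n) (hdiv : 8 * (K - 2) ∣ n)
    (hD : K + 1 + m * n ≤ D)
    (φ : ℕ → ℝ) (hφ : ∀ j, 1 ≤ j → j ≤ K → 0 < φ j)
    (μ σξ : ℝ) (hσ : 0 < σξ)
    (v : ℕ → Fin D → ℝ)
    (hortho : ∀ i j, i ≤ K + m * n → j ≤ K + m * n →
      (∑ t, v i t * v j t) = if i = j then (1 : ℝ) else 0)
    (y ysub ρ : Fin (m * n) → ℝ) (κ : Fin (m * n) → ℕ)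
    (hy : ∀ i, y i = 1 ∨ y i = -1)
    (hysub : ∀ i, ysub i = 1 ∨ ysub i = -1)
    (hρ : ∀ i, ρ i = 1 ∨ ρ i = -1)
    (hκ : ∀ i, 3 ≤ κ i ∧ κ i ≤ K)
    (hblock : ∀ i j : Fin (m * n), i.1 / m = j.1 / m →
      y i = y j ∧ ysub i = ysub j ∧ κ i = κ j ∧ ρ i = ρ j)
    (hbal : ∀ (a b r : ℝ) (c : ℕ), (a = 1 ∨ a = -1) → (b = 1 ∨ b = -1) →
      (r = 1 ∨ r = -1) → 3 ≤ c → c ≤ K →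
      Set.ncard {i : Fin (m * n) | y i = a ∧ ysub i = b ∧ κ i = c ∧ ρ i = r}
        = m * n / (8 * (K - 2)))
    (x : Fin (m * n) → Fin D → ℝ)
    (hx : ∀ i, x i = fun t => v 0 t + y i * φ 1 * v 1 t + (ysub i * φ 2 + μ) * v 2 t
      + ρ i * φ (κ i) * v (κ i) t + σξ * v (K + 1 + i.1) t)
    (M Mp : Matrix (Fin D) (Fin D) ℝ)
    (hM : M = ((m * n : ℝ))⁻¹ • ∑ i, Matrix.vecMulVec (x i) (x i))
    (xbar : ℝ → Fin D → ℝ)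
    (hxbar : ∀ ε, xbar ε = (2 / (m * n : ℝ)) •
      ∑ i, Set.indicator {j : Fin (m * n) | y j = ε} x i)
    (hMp : Mp = (2 : ℝ)⁻¹ • (Matrix.vecMulVec (xbar 1) (xbar 1)
      + Matrix.vecMulVec (xbar (-1)) (xbar (-1))))
    (xtil : Fin n → Fin D → ℝ)
    (hxtil : ∀ l : Fin n, xtil l = (m : ℝ)⁻¹ •
      ∑ i, Set.indicator {j : Fin (m * n) | j.1 / m = l.1} x i)
    (Mt : Matrix (Fin D) (Fin D) ℝ)
    (hMt : Mt = (n : ℝ)⁻¹ • ∑ l, Matrix.vecMulVec (xtil l) (xtil l))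
    (hμ : μ = 0) (p : ℕ) (hp1 : 1 ≤ p) (hpK : p ≤ K)
    (hcount : p ≤ Set.ncard {j : ℕ | (j = 0 ∧ φ 1 ^ 2 < 1) ∨ (j = 2 ∧ φ 1 ^ 2 < φ 2 ^ 2) ∨
      (3 ≤ j ∧ j ≤ K ∧ φ 1 ^ 2 < φ j ^ 2 / ((K : ℝ) - 2))}) :
    ∀ Wss : Matrix (Fin p) (Fin D) ℝ,
      (∀ W : Matrix (Fin p) (Fin D) ℝ, CLTraceLoss Mt M Wss ≤ CLTraceLoss Mt M W) →
      (∀ W : Matrix (Fin p) (Fin D) ℝ,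
        (∀ W' : Matrix (Fin p) (Fin D) ℝ, CLTraceLoss Mt M W ≤ CLTraceLoss Mt M W') →
        Real.sqrt (∑ i, ∑ j, (Wss i j) ^ 2) ≤ Real.sqrt (∑ i, ∑ j, (W i j) ^ 2)) →
      Wss.mulVec (v 1) = 0 := by
  intro W hmin hnorm
  have hbalanced : IsBalanced K fun i => (y i, ysub i, ρ i, κ i) :=
    isBalanced_of_ncard hy hysub hρ hκ (by simpa using hdiv.mul_left m) (by simpa using hbal)
  set S := datasetModel φ hσ hortho hK hbalanced with hS
  have hsamples : S.samples = of x := by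
    simp only [hS, datasetModel_samples, funext hx, hμ, add_zero]
  have hsignal : ∀ i i', blockIndex i = blockIndex i' → ∀ j, S.signal j i = S.signal j i' := by
    intro i i' h j
    obtain ⟨h₁, h₂, h₃, h₄⟩ := hblock i i' (congrArg Fin.val h)
    simp only [hS, datasetModel, of_apply, h₁, h₂, h₃, h₄]
  have hmoment : S.secondMoment = M := by
    simp [FeatureModel.secondMoment, hsamples, hM, sum_vecMulVec_self]
  have : Nonempty (Fin (m * n)) := ⟨⟨0, by positivity⟩⟩
  refine S.mulVec_feature_eq_zero_of_blockAverage (o := ⟨1, by omega⟩) (by omega)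
    card_filter_blockIndex_eq hsignal ?_
    (hcount.trans (ncard_le_card_filter_labelAmplitude_lt hK φ))
  rw [hmoment, hsamples, blockAverage_blockIndex_mul, ← funext hxtil, ← sum_vecMulVec_self,
    Fintype.card_fin, ← hMt]
  exact ⟨hmin, hnorm⟩
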